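/- arXiv:1203.2852 — 12 statements merged into one kernel-verified Lean document; each statement's English description precedes it below -/
import Mathlib

section
/- The set of equilibrium points of the vacuum vector field f_V in the region {(H,Σ) ∈ ℝ² : H ≥ 1, −1 ≤ Σ ≤ 1} is exactly {(1,−1), (1,1), (2,1)}. -/
/-- The vacuum LRS Bianchi type VIII vector field
`f_V(H,Σ) = ((1−H²)(H−2Σ)Σ, (1−Σ²)(2+(1−Σ²)+(H−Σ)²))`. -/
noncomputable def fV (p : ℝ × ℝ) : ℝ × ℝ :=
  ((1 - p.1 ^ 2) * (p.1 - 2 * p.2) * p.2,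
   (1 - p.2 ^ 2) * (2 + (1 - p.2 ^ 2) + (p.1 - p.2) ^ 2))

/-- The set of equilibrium points of the vacuum vector field `f_V` in the region
`{(H,Σ) : H ≥ 1, −1 ≤ Σ ≤ 1}` is exactly `{(1,−1), (1,1), (2,1)}`. -/
theorem vacuum_equilibria :
    {p : ℝ × ℝ | 1 ≤ p.1 ∧ -1 ≤ p.2 ∧ p.2 ≤ 1 ∧ fV p = 0} =
      {((1 : ℝ), (-1 : ℝ)), ((1 : ℝ), (1 : ℝ)), ((2 : ℝ), (1 : ℝ))} := by
  ext ⟨H, S⟩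
  simp only [Set.mem_ofPred_eq, Set.mem_insert_iff, Set.mem_singleton_iff, Prod.mk.injEq, fV,
    Prod.mk_eq_zero]
  constructor
  · rintro ⟨hH, hS₁, hS₂, h₁, h₂⟩
    -- The second factor of the `Σ`-component is at least `2` when `|Σ| ≤ 1`, so `Σ² = 1`.
    have hpos : 0 < 2 + (1 - S ^ 2) + (H - S) ^ 2 := by nlinarith [sq_nonneg (H - S)]
    have hS : S ^ 2 = 1 := by
      have := (mul_eq_zero.mp h₂).resolve_right hpos.ne'
      linarith
    rcases (show S = 1 ∨ S = -1 by simpa using hS) with rfl | rfl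
    -- For `Σ = 1` the `H`-component is `(1 - H²)(H - 2)`.
    · have h : (H - 1) * ((H + 1) * (H - 2)) = 0 := by linear_combination -h₁
      rcases mul_eq_zero.mp h with h | h
      · exact Or.inr (Or.inl ⟨by linarith, rfl⟩)
      · have := (mul_eq_zero.mp h).resolve_left (by positivity)
        exact Or.inr (Or.inr ⟨by linarith, rfl⟩)
    -- For `Σ = -1` the other roots `H = -1` and `H = -2` violate `H ≥ 1`.
    · have h : (H - 1) * ((H + 1) * (H + 2)) = 0 := by linear_combination h₁
      have := (mul_eq_zero.mp h).resolve_right (mul_pos (by linarith) (by linarith)).ne'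
      exact Or.inl ⟨by linarith, rfl⟩
  · rintro (⟨rfl, rfl⟩ | ⟨rfl, rfl⟩ | ⟨rfl, rfl⟩) <;> norm_num
end

section
/- The Jacobian matrix of the vacuum vector field f_V at the point D = (2,1) has eigenvalues −3 and −6; in particular both eigenvalues are real and negative, so D is a hyperbolic sink. -/
/-! The factor `1 − Σ²` makes the second component of `f_V` vanish on the whole line `Σ = 1`, so
the Jacobian at `D = (2, 1)` is upper triangular. Its diagonal entries are `−3` and `−6`
(`JacV_D`), and these are the roots of the characteristic polynomial. -/

open Polynomial

/-- First component of the vacuum vector field: `(1−H²)(H−2Σ)Σ`. -/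
noncomputable def fV1 (H S : ℝ) : ℝ := (1 - H ^ 2) * (H - 2 * S) * S

/-- Second component of the vacuum vector field: `(1−Σ²)(2+(1−Σ²)+(H−Σ)²)`. -/
noncomputable def fV2 (H S : ℝ) : ℝ := (1 - S ^ 2) * (2 + (1 - S ^ 2) + (H - S) ^ 2)

/-- The Jacobian matrix (matrix of partial derivatives) of `f_V` at `(H,Σ)`. -/
noncomputable def JacV (H S : ℝ) : Matrix (Fin 2) (Fin 2) ℝ :=
  !![deriv (fun x => fV1 x S) H, deriv (fun y => fV1 H y) S;
     deriv (fun x => fV2 x S) H, deriv (fun y => fV2 H y) S]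

/-- The zero entry comes from `fV2` vanishing identically on the line `Σ = 1`, which makes the
Jacobian at `D` upper triangular. -/
lemma JacV_D : JacV 2 1 = !![-3, 6; 0, -6] := by
  have h1 : deriv (fun x => fV1 x 1) 2 = -3 := by
    have h := ((((hasDerivAt_id (2 : ℝ)).pow 2).const_sub 1).mul
      ((hasDerivAt_id (2 : ℝ)).sub_const (2 * 1))).mul_const 1
    refine HasDerivAt.deriv (h.congr_deriv ?_)
    norm_num
  have h2 : deriv (fun y => fV1 2 y) 1 = 6 := by
    have h := ((((hasDerivAt_id (1 : ℝ)).const_mul 2).const_sub 2).const_mul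
      (1 - (2 : ℝ) ^ 2)).mul (hasDerivAt_id (1 : ℝ))
    refine HasDerivAt.deriv (h.congr_deriv ?_)
    norm_num
  have h3 : deriv (fun x => fV2 x 1) 2 = 0 := by
    simp [fV2]
  have h4 : deriv (fun y => fV2 2 y) 1 = -6 := by
    have hs := ((hasDerivAt_id (1 : ℝ)).pow 2).const_sub 1
    have h := hs.mul ((hs.const_add 2).add (((hasDerivAt_id (1 : ℝ)).const_sub 2).pow 2))
    refine HasDerivAt.deriv (h.congr_deriv ?_)
    norm_num
  rw [JacV, h1, h2, h3, h4]

/-- The Jacobian matrix of `f_V` at `D = (2,1)` has eigenvalues `−3` and `−6`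
(its characteristic polynomial is `(X+3)(X+6)`); both eigenvalues are real and
negative, so `D` is a hyperbolic sink. -/
theorem jacobian_at_D :
    (JacV 2 1).charpoly = (X - C (-3)) * (X - C (-6)) ∧ (-3 : ℝ) < 0 ∧ (-6 : ℝ) < 0 := by
  refine ⟨?_, by norm_num, by norm_num⟩
  rw [JacV_D, Matrix.charpoly, Matrix.det_fin_two]
  simp
end

section
/- Every maximal solution of the vacuum system (H,Σ)' = f_V(H,Σ) with initial condition in V_VIII = {(H,Σ) : H > 1, −1 < Σ < 1} is defined for all times t ∈ ℝ, remains in V_VIII, converges to the point D = (2,1) as t → +∞, and converges to the point T = (1,−1) as t → −∞. (LRS Bianchi type VIII vacuum solutions are past asymptotic to the Taub Kasner solution and future asymptotic to the type III form of flat spacetime.) -/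
/-!
The boundary lines `H = 1` and `Σ = ±1` are invariant, so a solution starting in `V_VIII` stays
there (`mem_VVIII_of_solution`). The quantity `H² / (1 - Σ²)` has logarithmic derivative
`4Σ(2 - Σ/H)`, which is bounded on `V_VIII`; hence `H` grows at most exponentially in both time
directions (`norm_bound_of_solution`) and a maximal solution is global (`eq_univ_of_maximal`).

On `V_VIII` one has `Σ' ≥ 2(1 - Σ²) > 0`, which forces `Σ → 1` in the future and `Σ → -1` in the
past. The equation `H' = -(H² - 1)(H - 2Σ)Σ` then pushes `H` towards `2Σ → 2` in the future,
whereas in backward time, where `Σ < 0`, it pushes `H` down to `1`. All four limits are obtained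
from one comparison lemma, `eventually_le_of_deriv_le`.
-/

open Filter

/-- The vacuum state space `V_VIII = {(H,Σ) : H > 1, −1 < Σ < 1}`. -/
def VVIII : Set (ℝ × ℝ) := {p : ℝ × ℝ | 1 < p.1 ∧ -1 < p.2 ∧ p.2 < 1}

/-! ### Continuation and scalar comparison -/

/-- A solution that is bounded on bounded time sets and whose interval of definition is bounded
above extends to a strictly larger interval. At the right end `b` the old solution and the
Picard–Lindelöf solution through its limit are glued; the two one-sided derivatives at `b` agree,
so uniqueness of solutions is not needed. -/
lemma exists_solution_past_right_end {E : Type*} [NormedAddCommGroup E] [NormedSpace ℝ E]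
    [ProperSpace E] {f : E → E} (hf : ContDiff ℝ 1 f) {x : ℝ → E} {s : Set ℝ} (hopen : IsOpen s)
    (hconn : s.OrdConnected) {t₀ : ℝ} (ht₀ : t₀ ∈ s)
    (hsol : ∀ t ∈ s, HasDerivAt x (f (x t)) t)
    (hbdd : ∀ b, ∃ C, ∀ t ∈ s, |t| ≤ b → ‖x t‖ ≤ C) (hs : BddAbove s) :
    ∃ (y : ℝ → E) (s' : Set ℝ), IsOpen s' ∧ s'.OrdConnected ∧ s ⊆ s' ∧
      (∀ t ∈ s', HasDerivAt y (f (y t)) t) ∧ Set.EqOn x y s ∧ s' ≠ s := by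
  set b := sSup s with hb
  have hlub : IsLUB s b := isLUB_csSup ⟨t₀, ht₀⟩ hs
  have hbs : b ∉ s := fun h => by
    obtain ⟨ε, hε, hball⟩ := Metric.isOpen_iff.1 hopen b h
    have : b + ε / 2 ∈ s := hball (by simp [abs_of_pos hε]; linarith)
    have := hlub.1 this
    linarith
  have hlt : ∀ t ∈ s, t < b := fun t ht =>
    lt_of_le_of_ne (hlub.1 ht) (fun h => hbs (h ▸ ht))
  have hIco : Set.Ico t₀ b ⊆ s := fun t ht => by
    obtain ⟨c, hc, htc, -⟩ := hlub.exists_between ht.2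
    exact hconn.out ht₀ hc ⟨ht.1, htc.le⟩
  have ht₀b := hlt t₀ ht₀
  -- The solution is Lipschitz on `[t₀, b)`, hence has a limit at `b`.
  obtain ⟨C, hC⟩ := hbdd (|t₀| + |b|)
  have hCx : ∀ t ∈ Set.Ico t₀ b, x t ∈ Metric.closedBall (0 : E) C := fun t ht => by
    rw [mem_closedBall_zero_iff]
    refine hC t (hIco ht) (abs_le.2 ⟨?_, ?_⟩)
    · have := neg_abs_le t₀; have := abs_nonneg b; linarith [ht.1]
    · have := le_abs_self b; have := abs_nonneg t₀; linarith [ht.2]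
  obtain ⟨K, hK⟩ := (isCompact_closedBall (0 : E) C).exists_bound_of_continuousOn
    hf.continuous.continuousOn
  have hlip : LipschitzOnWith K.toNNReal x (Set.Ico t₀ b) :=
    (convex_Ico t₀ b).lipschitzOnWith_of_nnnorm_hasDerivWithin_le
      (fun t ht => (hsol t (hIco ht)).hasDerivWithinAt) (fun t ht => by
        rw [← norm_toNNReal]; exact Real.toNNReal_le_toNNReal (hK _ (hCx t ht)))
  have hcauchy : Cauchy (map x (nhdsWithin b (Set.Iio b))) :=
    Cauchy.map_of_le (cauchy_nhds.mono nhdsWithin_le_nhds) hlip.uniformContinuousOn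
      (le_principal_iff.2 (Ico_mem_nhdsLT ht₀b))
  obtain ⟨l, hl⟩ := CompleteSpace.complete hcauchy
  -- Restart from the limit.
  obtain ⟨y, hyb, ε, hε, hy⟩ :=
    (hf.contDiffAt (x := l)).exists_forall_mem_closedBall_exists_eq_forall_mem_Ioo_hasDerivAt₀ b
  set z : ℝ → E := fun t => if t < b then x t else y t with hz
  have hzx : ∀ t < b, z t = x t := fun t ht => if_pos ht
  have hzy : ∀ t, b ≤ t → z t = y t := fun t ht => if_neg ht.not_gt
  have hzx' : ∀ t < b, z =ᶠ[nhds t] x := fun t ht =>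
    (eventually_lt_nhds ht).mono hzx
  have hzy' : ∀ t, b < t → z =ᶠ[nhds t] y := fun t ht =>
    (eventually_gt_nhds ht).mono fun r hr => hzy r hr.le
  have hzb : z b = l := by rw [hzy b le_rfl, hyb]
  have hderx : ∀ t ∈ s, HasDerivAt z (f (z t)) t := fun t ht => by
    rw [hzx t (hlt t ht)]
    exact (hsol t ht).congr_of_eventuallyEq (hzx' t (hlt t ht))
  have hzlim : Tendsto z (nhdsWithin b (Set.Iio b)) (nhds l) :=
    Tendsto.congr' (by filter_upwards [self_mem_nhdsWithin] with t ht using (hzx t ht).symm) hl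
  refine ⟨z, s ∪ Set.Ioo t₀ (b + ε), hopen.union isOpen_Ioo, ?_, Set.subset_union_left, ?_,
    fun t ht => (hzx t (hlt t ht)).symm, fun h => hbs (h ▸ Or.inr ⟨ht₀b, by linarith⟩)⟩
  · rw [← isPreconnected_iff_ordConnected]
    have hm : (t₀ + b) / 2 ∈ Set.Ico t₀ b := ⟨by linarith, by linarith⟩
    exact IsPreconnected.union ((t₀ + b) / 2) (hIco hm) ⟨by linarith, by linarith⟩
      (isPreconnected_iff_ordConnected.2 hconn) isPreconnected_Ioo
  · intro t ht
    have ht' : t ∈ s ∨ (b ≤ t ∧ t < b + ε) := by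
      rcases ht with h | h
      · exact Or.inl h
      · rcases lt_or_ge t b with h' | h'
        · exact Or.inl (hIco ⟨h.1.le, h'⟩)
        · exact Or.inr ⟨h', h.2⟩
    rcases ht' with h | ⟨h, h'⟩
    · exact hderx t h
    rcases h.eq_or_lt with rfl | h
    · have hleft : HasDerivWithinAt z (f (z b)) (Set.Iic b) b := by
        refine hasDerivWithinAt_Iic_of_tendsto_deriv (s := Set.Ico t₀ b)
          (fun t ht => (hderx t (hIco ht)).differentiableAt.differentiableWithinAt) ?_
          (Ico_mem_nhdsLT ht₀b) ?_
        · have : Tendsto z (nhdsWithin b (Set.Ico t₀ b)) (nhds (z b)) := by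
            rw [hzb]
            exact hzlim.mono_left (nhdsWithin_mono _ fun t ht => ht.2)
          exact this
        · have : Tendsto (fun t => f (z t)) (nhdsWithin b (Set.Iio b)) (nhds (f (z b))) := by
            rw [hzb]
            exact (hf.continuous.tendsto l).comp hzlim
          refine this.congr' ?_
          filter_upwards [Ico_mem_nhdsLT ht₀b] with t ht using (hderx t (hIco ht)).deriv.symm
      have hright : HasDerivWithinAt z (f (z b)) (Set.Ici b) b := by
        have := (hy b ⟨by linarith, by linarith⟩).hasDerivWithinAt (s := Set.Ici b)
        rw [hzy b le_rfl]
        exact this.congr (fun t ht => hzy t ht) (hzy b le_rfl)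
      have := hleft.union hright
      rwa [Set.Iic_union_Ici, hasDerivWithinAt_univ] at this
    · rw [hzy t h.le]
      exact (hy t ⟨by linarith, h'⟩).congr_of_eventuallyEq (hzy' t h)

/-- A maximal solution that is bounded on bounded time sets is global. The left end is reduced to
the right end by reversing time, which replaces `f` by `-f`. -/
lemma eq_univ_of_maximal {E : Type*} [NormedAddCommGroup E] [NormedSpace ℝ E]
    [ProperSpace E] {f : E → E} (hf : ContDiff ℝ 1 f) {x : ℝ → E} {s : Set ℝ} (hopen : IsOpen s)
    (hconn : s.OrdConnected) {t₀ : ℝ} (ht₀ : t₀ ∈ s)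
    (hsol : ∀ t ∈ s, HasDerivAt x (f (x t)) t)
    (hmax : ∀ (y : ℝ → E) (s' : Set ℝ), IsOpen s' → s'.OrdConnected → s ⊆ s' →
      (∀ t ∈ s', HasDerivAt y (f (y t)) t) → Set.EqOn x y s → s' = s)
    (hbdd : ∀ b, ∃ C, ∀ t ∈ s, |t| ≤ b → ‖x t‖ ≤ C) : s = Set.univ := by
  have habove : ¬ BddAbove s := fun h => by
    obtain ⟨y, s', h1, h2, h3, h4, h5, h6⟩ :=
      exists_solution_past_right_end hf hopen hconn ht₀ hsol hbdd h
    exact h6 (hmax y s' h1 h2 h3 h4 h5)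
  have hbelow : ¬ BddBelow s := fun h => by
    have hcn : ∀ {S : Set ℝ}, S.OrdConnected → (-S).OrdConnected := fun {S} hS =>
      ⟨fun a ha c hc r hr => hS.out hc ha ⟨neg_le_neg hr.2, neg_le_neg hr.1⟩⟩
    obtain ⟨y, s', h1, h2, h3, h4, h5, h6⟩ :=
      exists_solution_past_right_end (f := fun p => -f p) (x := fun t => x (-t)) (s := -s)
        (t₀ := -t₀) hf.neg hopen.neg (hcn hconn) (by simpa using ht₀)
        (fun t ht => by
          simpa [Function.comp_def] using (hsol (-t) ht).scomp t (hasDerivAt_neg t))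
        (fun b => by
          obtain ⟨C, hC⟩ := hbdd b
          exact ⟨C, fun t ht htb => hC (-t) ht (by simpa using htb)⟩)
        (by simpa using h)
    have := hmax (fun t => y (-t)) (-s') h1.neg (hcn h2)
      (fun t ht => h3 (by simpa using ht))
      (fun t ht => by
        simpa [Function.comp_def] using (h4 (-t) ht).scomp t (hasDerivAt_neg t))
      (fun t ht => by simpa using h5 (x := -t) (by simpa using ht))
    exact h6 (by rw [← this, neg_neg])
  refine Set.eq_univ_of_forall fun t => ?_
  obtain ⟨a, ha, hat⟩ := not_bddAbove_iff.1 habove t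
  obtain ⟨c, hc, hct⟩ := not_bddBelow_iff.1 hbelow t
  exact hconn.out hc ha ⟨hct.le, hat.le⟩

/-- Positivity is preserved by a scalar linear equation `u' = g u`, because
`u(t) exp(-∫ g)` is constant. -/
lemma pos_of_linear_ode {s : Set ℝ} (hopen : IsOpen s) (hconn : s.OrdConnected)
    {u g : ℝ → ℝ} (hu : ∀ t ∈ s, HasDerivAt u (g t * u t) t) (hg : ContinuousOn g s)
    {t₀ : ℝ} (ht₀ : t₀ ∈ s) (h0 : 0 < u t₀) : ∀ t ∈ s, 0 < u t := by
  intro t ht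
  have hG : ∀ r ∈ s, HasDerivAt (fun r => ∫ τ in t₀..r, g τ) (g r) r := fun r hr =>
    intervalIntegral.integral_hasDerivAt_right
      ((hg.mono (hconn.uIcc_subset ht₀ hr)).intervalIntegrable)
      (hg.stronglyMeasurableAtFilter hopen r hr) (hg.continuousAt (hopen.mem_nhds hr))
  have hd : ∀ r ∈ s, HasDerivWithinAt (fun r => u r * Real.exp (-∫ τ in t₀..r, g τ)) 0 s r :=
    fun r hr => by
      have := (hu r hr).mul (hG r hr).neg.exp
      refine (this.congr_deriv ?_).hasDerivWithinAt
      ring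
  have hc := hconn.convex.norm_image_sub_le_of_norm_hasDerivWithin_le (C := 0) hd
    (fun _ _ => by simp) ht₀ ht
  simp only [zero_mul, norm_le_zero_iff, sub_eq_zero, intervalIntegral.integral_same, neg_zero,
    Real.exp_zero, mul_one] at hc
  rw [← hc] at h0
  exact pos_of_mul_pos_left h0 (Real.exp_pos _).le

/-- If eventually `u` decreases at a definite rate whenever it is at least `b`, then it must drop
to `b` at some time, and it cannot cross `b` upwards afterwards. -/
lemma eventually_le_of_deriv_le {u u' : ℝ → ℝ} (hu : ∀ t, HasDerivAt u (u' t) t) {b δ : ℝ}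
    (hδ : 0 < δ) (h : ∀ᶠ t in atTop, b ≤ u t → u' t ≤ -δ) : ∀ᶠ t in atTop, u t ≤ b := by
  obtain ⟨T, hT⟩ := eventually_atTop.1 h
  have hcont : Continuous u := continuous_iff_continuousAt.2 fun t => (hu t).continuousAt
  obtain ⟨t₁, ht₁, hb⟩ : ∃ t₁, T ≤ t₁ ∧ u t₁ ≤ b := by
    by_contra! hcon
    have key := (convex_Ici T).image_sub_le_mul_sub_of_deriv_le (f := u) (C := -δ)
      hcont.continuousOn (fun t _ => (hu t).differentiableAt.differentiableWithinAt)
      (fun t ht => by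
        rw [(hu t).deriv]
        have : T ≤ t := interior_subset ht
        exact hT t this (hcon t this).le)
    have hpos : 0 < (u T - b) / δ := div_pos (by linarith [hcon T le_rfl]) hδ
    have h1 := key T Set.self_mem_Ici (T + (u T - b) / δ) (by simp [hpos.le]) (by linarith)
    have h2 := hcon (T + (u T - b) / δ) (by linarith)
    have h3 : -δ * (T + (u T - b) / δ - T) = -(u T - b) := by field_simp; ring
    linarith
  filter_upwards [eventually_ge_atTop t₁] with t ht
  exact image_le_of_deriv_right_lt_deriv_boundary (f := u) (f' := u') (B := fun _ => b)
    (B' := fun _ => 0) hcont.continuousOn (fun r _ => (hu r).hasDerivWithinAt) hb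
    (fun r => hasDerivAt_const r b)
    (fun r hr hrb => by linarith [hT r (ht₁.trans hr.1) (le_of_eq hrb.symm)]) ⟨ht, le_rfl⟩

/-! ### Invariance and global existence -/

lemma contDiff_fV : ContDiff ℝ 1 fV := by
  unfold fV
  fun_prop

lemma hasDerivAt_components {x : ℝ → ℝ × ℝ} {t : ℝ} (h : HasDerivAt x (fV (x t)) t) :
    HasDerivAt (fun t => (x t).1) (fV (x t)).1 t ∧ HasDerivAt (fun t => (x t).2) (fV (x t)).2 t :=
  ⟨h.fst, h.snd⟩

/-- `V_VIII` is invariant: each of `H - 1`, `1 + Σ`, `1 - Σ` is a factor of its own derivative,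
so it satisfies a linear equation along the solution and stays positive. -/
lemma mem_VVIII_of_solution {x : ℝ → ℝ × ℝ} {s : Set ℝ} (hopen : IsOpen s)
    (hconn : s.OrdConnected) {t₀ : ℝ} (ht₀ : t₀ ∈ s) (hx₀ : x t₀ ∈ VVIII)
    (hsol : ∀ t ∈ s, HasDerivAt x (fV (x t)) t) : ∀ t ∈ s, x t ∈ VVIII := by
  have hc : ContinuousOn x s := fun t ht => (hsol t ht).continuousAt.continuousWithinAt
  obtain ⟨h1, h2, h3⟩ := hx₀
  have p1 := pos_of_linear_ode hopen hconn (u := fun t => (x t).1 - 1)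
    (g := fun t => -(1 + (x t).1) * ((x t).1 - 2 * (x t).2) * (x t).2)
    (fun t ht => ((hasDerivAt_components (hsol t ht)).1.sub_const 1).congr_deriv
      (by simp only [fV]; ring)) (by fun_prop) ht₀ (by simpa using h1)
  have p2 := pos_of_linear_ode hopen hconn (u := fun t => 1 + (x t).2)
    (g := fun t => (1 - (x t).2) * (2 + (1 - (x t).2 ^ 2) + ((x t).1 - (x t).2) ^ 2))
    (fun t ht => ((hasDerivAt_components (hsol t ht)).2.const_add 1).congr_deriv
      (by simp only [fV]; ring)) (by fun_prop) ht₀ (by linarith)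
  have p3 := pos_of_linear_ode hopen hconn (u := fun t => 1 - (x t).2)
    (g := fun t => -(1 + (x t).2) * (2 + (1 - (x t).2 ^ 2) + ((x t).1 - (x t).2) ^ 2))
    (fun t ht => ((hasDerivAt_components (hsol t ht)).2.const_sub 1).congr_deriv
      (by simp only [fV]; ring)) (by fun_prop) ht₀ (by linarith)
  exact fun t ht => ⟨by linarith [p1 t ht], by linarith [p2 t ht], by linarith [p3 t ht]⟩

/-- Solutions in `V_VIII` are bounded on bounded time sets. The function
`L = log (H² / (1 - Σ²))` satisfies `L' = 4Σ(2 - Σ/H)`, whose absolute value is at most `12`, so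
`L` grows at most linearly in time; since `0 < 1 - Σ² ≤ 1`, it dominates `2 log H`. -/
lemma norm_bound_of_solution {x : ℝ → ℝ × ℝ} {s : Set ℝ}
    (hconn : s.OrdConnected) {t₀ : ℝ} (ht₀ : t₀ ∈ s) (hV : ∀ t ∈ s, x t ∈ VVIII)
    (hsol : ∀ t ∈ s, HasDerivAt x (fV (x t)) t) (b : ℝ) :
    ∃ C, ∀ t ∈ s, |t| ≤ b → ‖x t‖ ≤ C := by
  set L : ℝ → ℝ := fun t => 2 * Real.log (x t).1 - Real.log (1 - (x t).2 ^ 2) with hL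
  have hd : ∀ t ∈ s, HasDerivWithinAt L (4 * (x t).2 * (2 - (x t).2 / (x t).1)) s t :=
    fun t ht => by
      obtain ⟨h1, h2, h3⟩ := hV t ht
      obtain ⟨d1, d2⟩ := hasDerivAt_components (hsol t ht)
      have hH : (x t).1 ≠ 0 := by linarith
      have hS : 1 - (x t).2 ^ 2 ≠ 0 := by nlinarith
      have := ((d1.log hH).const_mul 2).sub (((d2.pow 2).const_sub 1).log hS)
      refine (this.congr_deriv ?_).hasDerivWithinAt
      simp only [fV, Pi.pow_apply]
      field_simp
      push_cast
      ring
  have hb : ∀ t ∈ s, ‖4 * (x t).2 * (2 - (x t).2 / (x t).1)‖ ≤ 12 := fun t ht => by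
    obtain ⟨h1, h2, h3⟩ := hV t ht
    have hS : |(x t).2| ≤ 1 := abs_le.2 ⟨h2.le, h3.le⟩
    have hq : |(x t).2 / (x t).1| ≤ 1 := by
      rw [abs_div, div_le_one (abs_pos.2 (by linarith))]
      exact hS.trans (h1.le.trans (le_abs_self _))
    have h3 : |2 - (x t).2 / (x t).1| ≤ 3 := by
      rw [abs_le] at hq ⊢
      constructor <;> linarith [hq.1, hq.2]
    rw [Real.norm_eq_abs, abs_mul, abs_mul]
    norm_num
    nlinarith [abs_nonneg (x t).2]
  refine ⟨Real.exp (|L t₀| + 12 * (b + |t₀|)), fun t ht htb => ?_⟩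
  have hLt := hconn.convex.norm_image_sub_le_of_norm_hasDerivWithin_le hd hb ht₀ ht
  rw [Real.norm_eq_abs, Real.norm_eq_abs] at hLt
  have hL1 : L t ≤ |L t₀| + 12 * (b + |t₀|) := by
    linarith [le_abs_self (L t - L t₀), le_abs_self (L t₀), abs_sub t t₀]
  obtain ⟨h1, h2, h3⟩ := hV t ht
  have hlog1 : 0 < Real.log (x t).1 := Real.log_pos h1
  have hlog2 : Real.log (1 - (x t).2 ^ 2) ≤ 0 :=
    Real.log_nonpos (by nlinarith) (by nlinarith [sq_nonneg (x t).2])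
  have hH : (x t).1 ≤ Real.exp (|L t₀| + 12 * (b + |t₀|)) := by
    rw [← Real.log_le_iff_le_exp (by linarith)]
    simp only [hL] at hL1 ⊢
    linarith
  rw [Prod.norm_def, Real.norm_eq_abs, Real.norm_eq_abs]
  exact max_le (by rwa [abs_of_pos (by linarith)]) ((abs_le.2 ⟨h2.le, h3.le⟩).trans (by linarith))

/-! ### Asymptotics -/

section Asymptotics

variable {x : ℝ → ℝ × ℝ}

lemma monotone_snd_of_solution (hV : ∀ t, x t ∈ VVIII) (hsol : ∀ t, HasDerivAt x (fV (x t)) t) :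
    Monotone fun t => (x t).2 := by
  have hd := fun t => (hasDerivAt_components (hsol t)).2
  refine monotone_of_deriv_nonneg (fun t => (hd t).differentiableAt) fun t => ?_
  obtain ⟨h1, h2, h3⟩ := hV t
  rw [(hd t).deriv]
  exact mul_nonneg (by nlinarith) (by nlinarith [sq_nonneg ((x t).1 - (x t).2)])

/-- While `1 - Σ ≥ c`, monotonicity of `Σ` bounds `1 + Σ` below by its value at time `0`, so
`Σ' ≥ 2 (1 - Σ²)` stays away from zero. -/
lemma tendsto_snd_atTop (hV : ∀ t, x t ∈ VVIII) (hsol : ∀ t, HasDerivAt x (fV (x t)) t) :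
    Tendsto (fun t => (x t).2) atTop (nhds 1) := by
  refine tendsto_order.2 ⟨fun a ha => ?_, fun a ha => .of_forall fun t => (hV t).2.2.trans ha⟩
  obtain ⟨h01, h02, h03⟩ := hV 0
  have hc : 0 < (1 - a) / 2 := by linarith
  have key := eventually_le_of_deriv_le (u := fun t => 1 - (x t).2)
    (fun t => (hasDerivAt_components (hsol t)).2.const_sub 1) (b := (1 - a) / 2)
    (δ := (1 - a) / 2 * (1 + (x 0).2) * 2) (by have : 0 < 1 + (x 0).2 := by linarith
                                               positivity) (by
      filter_upwards [eventually_ge_atTop 0] with t ht hb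
      obtain ⟨h1, h2, h3⟩ := hV t
      have hm : (x 0).2 ≤ (x t).2 := monotone_snd_of_solution hV hsol ht
      have hA : (1 - a) / 2 * (1 + (x 0).2) ≤ 1 - (x t).2 ^ 2 := by
        have := mul_le_mul hb (show 1 + (x 0).2 ≤ 1 + (x t).2 by linarith) (by linarith)
          (by linarith)
        linarith
      have hQ : 2 ≤ 2 + (1 - (x t).2 ^ 2) + ((x t).1 - (x t).2) ^ 2 := by
        nlinarith [sq_nonneg ((x t).1 - (x t).2)]
      have := mul_le_mul hA hQ (by norm_num) (by nlinarith)
      simp only [fV]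
      linarith)
  filter_upwards [key] with t ht
  linarith

/-- The limit `Σ → -1` in the past, in terms of the reversed time `-t`. -/
lemma tendsto_snd_atBot (hV : ∀ t, x t ∈ VVIII) (hsol : ∀ t, HasDerivAt x (fV (x t)) t) :
    Tendsto (fun t => (x (-t)).2) atTop (nhds (-1)) := by
  refine tendsto_order.2 ⟨fun a ha => .of_forall fun t => ha.trans (hV _).2.1, fun a ha => ?_⟩
  obtain ⟨h01, h02, h03⟩ := hV 0
  have hc : 0 < (1 + a) / 2 := by linarith
  have key := eventually_le_of_deriv_le (u := fun t => 1 + (x (-t)).2)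
    (u' := fun t => -(fV (x (-t))).2)
    (fun t => (((hasDerivAt_components (hsol (-t))).2.comp t (hasDerivAt_neg t)).const_add
      1).congr_deriv (by ring)) (b := (1 + a) / 2)
    (δ := (1 + a) / 2 * (1 - (x 0).2) * 2) (by have : 0 < 1 - (x 0).2 := by linarith
                                               positivity) (by
      filter_upwards [eventually_ge_atTop 0] with t ht hb
      obtain ⟨h1, h2, h3⟩ := hV (-t)
      have hm : (x (-t)).2 ≤ (x 0).2 := monotone_snd_of_solution hV hsol (by linarith)
      have hA : (1 + a) / 2 * (1 - (x 0).2) ≤ 1 - (x (-t)).2 ^ 2 := by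
        have := mul_le_mul hb (show 1 - (x 0).2 ≤ 1 - (x (-t)).2 by linarith) (by linarith)
          (by linarith)
        linarith
      have hQ : 2 ≤ 2 + (1 - (x (-t)).2 ^ 2) + ((x (-t)).1 - (x (-t)).2) ^ 2 := by
        nlinarith [sq_nonneg ((x (-t)).1 - (x (-t)).2)]
      have := mul_le_mul hA hQ (by norm_num) (by nlinarith)
      simp only [fV]
      linarith)
  filter_upwards [key] with t ht
  linarith

/-- Since `Σ → 1`, the equation for `H` drives it to `2Σ`, hence to `2`. -/
lemma tendsto_fst_atTop (hV : ∀ t, x t ∈ VVIII) (hsol : ∀ t, HasDerivAt x (fV (x t)) t) :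
    Tendsto (fun t => (x t).1) atTop (nhds 2) := by
  have hS := tendsto_snd_atTop hV hsol
  refine tendsto_order.2 ⟨fun a ha => ?_, fun a ha => ?_⟩
  · -- It suffices to treat a lower bound `c` strictly between `max a 1` and `2`.
    obtain ⟨c, hac, hc2⟩ := exists_between (max_lt ha one_lt_two)
    have hc1 : 1 < c := (le_max_right _ _).trans_lt hac
    have hac : a < c := (le_max_left _ _).trans_lt hac
    -- `H'` degenerates at `H = 1`; the logarithmic derivative of `H - 1`, equal to
    -- `(H + 1)(2Σ - H)Σ`, does not.
    have key := eventually_le_of_deriv_le (u := fun t => -Real.log ((x t).1 - 1))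
      (fun t => ((((hasDerivAt_components (hsol t)).1.sub_const 1).log
        (by linarith [(hV t).1])).neg)) (b := -Real.log (c - 1)) (δ := (2 - c) / 2)
      (by linarith) (by
        filter_upwards [hS.eventually_const_lt (show (1 : ℝ) / 2 < 1 by norm_num),
          hS.eventually_const_lt (show (2 + c) / 4 < 1 by linarith)] with t hs1 hs2 hb
        obtain ⟨h1, h2, h3⟩ := hV t
        have hHc : (x t).1 ≤ c := by
          have := (Real.log_le_log_iff (by linarith) (by linarith)).1 (neg_le_neg_iff.1 hb)
          linarith
        have h4 : (fV (x t)).1 / ((x t).1 - 1)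
            = ((x t).1 + 1) * ((2 * (x t).2 - (x t).1) * (x t).2) := by
          rw [div_eq_iff (by linarith)]
          simp only [fV]
          ring
        have h5 : (2 - c) / 2 * (1 / 2) ≤ (2 * (x t).2 - (x t).1) * (x t).2 :=
          mul_le_mul (by linarith) hs1.le (by norm_num) (by linarith)
        have h6 := mul_le_mul (show 2 ≤ (x t).1 + 1 by linarith) h5 (by linarith) (by linarith)
        rw [h4]
        linarith)
    filter_upwards [key] with t ht
    have := (Real.log_le_log_iff (by linarith) (by linarith [(hV t).1])).1 (neg_le_neg_iff.1 ht)
    linarith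
  · obtain ⟨c, hc2, hca⟩ := exists_between ha
    have key := eventually_le_of_deriv_le
      (fun t => (hasDerivAt_components (hsol t)).1) (b := c) (δ := 3 * ((c - 2) * (1 / 2)))
      (by linarith) (by
        filter_upwards [hS.eventually_const_lt (show (1 : ℝ) / 2 < 1 by norm_num)] with t hs1 hb
        obtain ⟨h1, h2, h3⟩ := hV t
        have h5 : (c - 2) * (1 / 2) ≤ ((x t).1 - 2 * (x t).2) * (x t).2 :=
          mul_le_mul (by linarith) hs1.le (by norm_num) (by linarith)
        have h6 := mul_le_mul (show 3 ≤ (x t).1 ^ 2 - 1 by nlinarith) h5 (by linarith)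
          (by nlinarith)
        simp only [fV]
        linarith)
    filter_upwards [key] with t ht using ht.trans_lt hca

/-- The limit `H → 1` in the past, in terms of the reversed time `τ = -t`: once `Σ < -1/2`,
`dH/dτ = (H² - 1)(H - 2Σ)Σ` is negative and bounded away from zero as long as `H ≥ c > 1`. -/
lemma tendsto_fst_atBot (hV : ∀ t, x t ∈ VVIII) (hsol : ∀ t, HasDerivAt x (fV (x t)) t) :
    Tendsto (fun t => (x (-t)).1) atTop (nhds 1) := by
  have hS := tendsto_snd_atBot hV hsol
  refine tendsto_order.2 ⟨fun a ha => .of_forall fun t => ha.trans (hV _).1, fun a ha => ?_⟩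
  obtain ⟨c, hc1, hca⟩ := exists_between ha
  have key := eventually_le_of_deriv_le (u := fun t => (x (-t)).1)
    (u' := fun t => -(fV (x (-t))).1)
    (fun t => ((hasDerivAt_components (hsol (-t))).1.comp t (hasDerivAt_neg t)).congr_deriv
      (by ring)) (b := c) (δ := c ^ 2 - 1) (by nlinarith) (by
      filter_upwards [hS.eventually_lt_const (show (-1 : ℝ) < -1 / 2 by norm_num)] with t hs1 hb
      obtain ⟨h1, h2, h3⟩ := hV (-t)
      have h5 : (2 : ℝ) * (1 / 2) ≤ ((x (-t)).1 - 2 * (x (-t)).2) * -(x (-t)).2 :=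
        mul_le_mul (by linarith) (by linarith) (by norm_num) (by linarith)
      have h6 := mul_le_mul (show c ^ 2 - 1 ≤ (x (-t)).1 ^ 2 - 1 by nlinarith) h5 (by linarith)
        (by nlinarith)
      simp only [fV]
      linarith)
  filter_upwards [key] with t ht using ht.trans_lt hca

end Asymptotics

/-- Every maximal solution of the vacuum system `(H,Σ)' = f_V(H,Σ)` with initial condition
in `V_VIII` is defined for all times, remains in `V_VIII`, converges to `D = (2,1)` as
`t → +∞` and to `T = (1,−1)` as `t → −∞`. Here a maximal solution is a solution on an
open order-connected set (interval) `s` containing the initial time which admits no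
extension to a strictly larger such set. -/
theorem vacuum_global_asymptotics
    (x : ℝ → ℝ × ℝ) (s : Set ℝ) (hopen : IsOpen s) (hconn : s.OrdConnected)
    (t₀ : ℝ) (ht₀ : t₀ ∈ s) (hx₀ : x t₀ ∈ VVIII)
    (hsol : ∀ t ∈ s, HasDerivAt x (fV (x t)) t)
    (hmax : ∀ (y : ℝ → ℝ × ℝ) (s' : Set ℝ), IsOpen s' → s'.OrdConnected → s ⊆ s' →
      (∀ t ∈ s', HasDerivAt y (fV (y t)) t) → Set.EqOn x y s → s' = s) :
    s = Set.univ ∧ (∀ t, x t ∈ VVIII) ∧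
      Tendsto x atTop (nhds ((2 : ℝ), (1 : ℝ))) ∧
      Tendsto x atBot (nhds ((1 : ℝ), (-1 : ℝ))) := by
  have hVs := mem_VVIII_of_solution hopen hconn ht₀ hx₀ hsol
  have hs : s = Set.univ := eq_univ_of_maximal contDiff_fV hopen hconn ht₀ hsol hmax
    (norm_bound_of_solution hconn ht₀ hVs hsol)
  subst hs
  have hV : ∀ t, x t ∈ VVIII := fun t => hVs t trivial
  have hd : ∀ t, HasDerivAt x (fV (x t)) t := fun t => hsol t trivial
  refine ⟨rfl, hV, (tendsto_fst_atTop hV hd).prodMk_nhds (tendsto_snd_atTop hV hd), ?_⟩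
  have := ((tendsto_fst_atBot hV hd).prodMk_nhds (tendsto_snd_atBot hV hd)).comp
    tendsto_neg_atBot_atTop
  simpa [Function.comp_def] using this
end

section
/- Let w ∈ (−1/3, 1) and β ∈ ℝ, and let d := (1−3w)² + 6β(1−w). The points (1,−1), (1,1), (2,1) and (1,−β) are zeros of the type III vector field f; if d > 0 then P := ((2+3β(1−w))/√d, (1+3w)/√d) is also a zero of f; and conversely every zero (H,Σ) of f with H ≥ 1 and −1 ≤ Σ ≤ 1 is equal to one of the points (1,−1), (1,1), (2,1), (1,−β), or (in the case d > 0) P. -/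
/-!
The four fixed points are checked by direct substitution, and for a zero on one of the edges
`H = 1`, `Σ = ±1` the vector field factors completely.

Off these edges put `k = (3/2)(1 - w)`. A zero satisfies `HΣ = 2 - k + kΣ²` and
`H² = 1 + k(HΣ + β)`. Squaring the first relation and inserting the second, the quartic terms in
`Σ` cancel, which leaves `dΣ² = (1 + 3w)²` (`sq_relation`). As `1 + 3w > 0`, this forces `d > 0`;
since `HΣ > 0` and `H > 0`, also `Σ > 0`, so `Σ = (1 + 3w)/√d`, and `HΣ = 2 - k + kΣ²` then
determines `H`.
-/

/-- The Bianchi type III boundary vector field with matter parameters `w`, `β`: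
`f(H,Σ) = (−(1−H²)(2 − (3/2)(1−w)(1−Σ²) − HΣ), −(1−Σ²)((1−H²) + (3/2)(1−w)(HΣ+β)))`. -/
noncomputable def fIII (w β : ℝ) (p : ℝ × ℝ) : ℝ × ℝ :=
  (-(1 - p.1 ^ 2) * (2 - 3 / 2 * (1 - w) * (1 - p.2 ^ 2) - p.1 * p.2),
   -(1 - p.2 ^ 2) * ((1 - p.1 ^ 2) + 3 / 2 * (1 - w) * (p.1 * p.2 + β)))

/-- Elimination of `H` from the two equations for an equilibrium off the edges. -/
lemma sq_relation (w β H S : ℝ)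
    (hA : 2 - 3 / 2 * (1 - w) * (1 - S ^ 2) - H * S = 0)
    (hB : (1 - H ^ 2) + 3 / 2 * (1 - w) * (H * S + β) = 0) :
    ((1 - 3 * w) ^ 2 + 6 * β * (1 - w)) * S ^ 2 = (1 + 3 * w) ^ 2 := by
  have h : H * S = 2 - 3 / 2 * (1 - w) * (1 - S ^ 2) := by linarith
  have h2 : H ^ 2 * S ^ 2 = (2 - 3 / 2 * (1 - w) * (1 - S ^ 2)) ^ 2 := by
    rw [← h]; ring
  have h3 : H ^ 2 = 1 + 3 / 2 * (1 - w) * (2 - 3 / 2 * (1 - w) * (1 - S ^ 2) + β) := by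
    rw [← h]; linarith
  rw [h3] at h2
  linear_combination 4 * h2

/-- The points `(1,−1)`, `(1,1)`, `(2,1)`, `(1,−β)` are zeros of the type III vector
field; if `d = (1−3w)² + 6β(1−w) > 0` then `P = ((2+3β(1−w))/√d, (1+3w)/√d)` is also a
zero; and every zero `(H,Σ)` with `H ≥ 1`, `−1 ≤ Σ ≤ 1` is one of these points. -/
theorem typeIII_equilibria (w β : ℝ) (hw : w ∈ Set.Ioo (-(1 / 3) : ℝ) 1) :
    let d : ℝ := (1 - 3 * w) ^ 2 + 6 * β * (1 - w)
    let P : ℝ × ℝ := ((2 + 3 * β * (1 - w)) / Real.sqrt d, (1 + 3 * w) / Real.sqrt d)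
    fIII w β (1, -1) = 0 ∧ fIII w β (1, 1) = 0 ∧ fIII w β (2, 1) = 0 ∧
      fIII w β (1, -β) = 0 ∧ (0 < d → fIII w β P = 0) ∧
      ∀ p : ℝ × ℝ, fIII w β p = 0 → 1 ≤ p.1 → -1 ≤ p.2 → p.2 ≤ 1 →
        p = (1, -1) ∨ p = (1, 1) ∨ p = (2, 1) ∨ p = (1, -β) ∨ (0 < d ∧ p = P) := by
  obtain ⟨hw1, hw2⟩ := hw
  intro d P
  have hpos : 0 < 1 + 3 * w := by linarith
  refine ⟨by simp [fIII], by simp [fIII], by simp [fIII], by simp [fIII], ?_, ?_⟩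
  · intro hd
    have hs : 0 < √d := Real.sqrt_pos.mpr hd
    have hsq : √d ^ 2 = (1 - 3 * w) ^ 2 + 6 * β * (1 - w) := Real.sq_sqrt hd.le
    simp only [fIII, P, Prod.mk_eq_zero]
    generalize √d = s at hs hsq
    have hA : 2 - 3 / 2 * (1 - w) * (1 - ((1 + 3 * w) / s) ^ 2)
        - (2 + 3 * β * (1 - w)) / s * ((1 + 3 * w) / s) = 0 := by
      field_simp
      linear_combination (1 + 3 * w) * hsq
    have hB : (1 - ((2 + 3 * β * (1 - w)) / s) ^ 2)
        + 3 / 2 * (1 - w) * ((2 + 3 * β * (1 - w)) / s * ((1 + 3 * w) / s) + β) = 0 := by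
      field_simp
      linear_combination (2 + 3 * β * (1 - w)) * hsq
    rw [hA, hB]
    simp
  · rintro ⟨H, S⟩ hf hH hS1 hS2
    simp only [fIII, Prod.mk_eq_zero, mul_eq_zero, neg_eq_zero] at hf hH hS1 hS2
    obtain ⟨hf1, hf2⟩ := hf
    by_cases hS : 1 - S ^ 2 = 0
    · have hS' : (S - 1) * (S + 1) = 0 := by linarith
      rcases hf1 with h | h
      · have hH1 : H = 1 := by nlinarith
        subst hH1
        rcases mul_eq_zero.mp hS' with h' | h'
        · obtain rfl : S = 1 := by linarith
          simp
        · obtain rfl : S = -1 := by linarith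
          simp
      · rw [hS] at h
        rcases mul_eq_zero.mp hS' with h' | h'
        · obtain rfl : S = 1 := by linarith
          obtain rfl : H = 2 := by linarith
          simp
        · obtain rfl : S = -1 := by linarith
          -- `H = -2` lies outside the region `H ≥ 1`
          linarith
    · have hB := hf2.resolve_left hS
      by_cases hH1 : H = 1
      · subst hH1
        have h : (1 - w) * (S + β) = 0 := by linarith
        rcases mul_eq_zero.mp h with h | h
        · linarith
        · obtain rfl : S = -β := by linarith
          simp
      · have hH2 : 1 - H ^ 2 ≠ 0 := fun h => hH1 (by nlinarith)
        have hA := hf1.resolve_left hH2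
        have hdS : d * S ^ 2 = (1 + 3 * w) ^ 2 := sq_relation w β H S hA hB
        have hd : 0 < d := by
          have h : 0 < d * S ^ 2 := by rw [hdS]; positivity
          exact pos_of_mul_pos_left h (sq_nonneg S)
        have hSpos : 0 < S := by
          -- `2 - k = (1 + 3w)/2 > 0`
          have h : 0 < H * S := by nlinarith [mul_nonneg (sub_nonneg.mpr hw2.le) (sq_nonneg S)]
          exact pos_of_mul_pos_right h (by linarith)
        have hs : 0 < √d := Real.sqrt_pos.mpr hd
        have hsq : √d ^ 2 = d := Real.sq_sqrt hd.le
        have hsS : √d * S = 1 + 3 * w := by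
          rw [← sq_eq_sq₀ (by positivity) hpos.le, mul_pow, hsq, hdS]
        refine Or.inr (Or.inr (Or.inr (Or.inr ⟨hd, ?_⟩)))
        have hd' : d = (1 - 3 * w) ^ 2 + 6 * β * (1 - w) := rfl
        refine Prod.ext ?_ ?_
        · change H = (2 + 3 * β * (1 - w)) / √d
          rw [eq_div_iff hs.ne']
          -- after multiplying by `1 + 3w = √d Σ`, both sides equal `d (HΣ)`
          apply mul_right_cancel₀ hpos.ne'
          have e1 : H * √d * (1 + 3 * w) = d * (H * S) := by
            linear_combination -(H * √d) * hsS + H * S * hsq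
          rw [e1]
          have e2 : H * S = 2 - 3 / 2 * (1 - w) * (1 - S ^ 2) := by linarith
          rw [e2]
          linear_combination (3 / 2 * (1 - w)) * hdS + (1 + 3 * w) / 2 * hd'
        · change S = (1 + 3 * w) / √d
          rw [eq_div_iff hs.ne']
          linarith
end

section
/- Let w ∈ (−1/3, 1) and β ∈ ℝ with d := (1−3w)² + 6β(1−w) > 0, and let P := ((2+3β(1−w))/√d, (1+3w)/√d). Then P lies in the open region B_III = {(H,Σ) : H > 1, −1 < Σ < 1} if and only if β(1−w) > 2w and 9β²(1−w)² + 6β(1−w) + 4 > (1−3w)²; moreover, in that case the Σ-coordinate of P is strictly positive. -/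
/-!
Put `b = β(1-w)`. As `1 + 3w > 0`, the `Σ`-coordinate of `P` is always positive, and squaring
turns `Σ < 1` into `(1+3w)² < d`, i.e. `2w < b`. Under that condition `2 + 3b > 2(1+3w) > 0`, so
squaring also turns `H > 1` into `d < (2+3b)²`, which is the second inequality.
-/

/-- The Bianchi type III state space `B_III = {(H,Σ) : H > 1, −1 < Σ < 1}`. -/
def BIII : Set (ℝ × ℝ) := {p : ℝ × ℝ | 1 < p.1 ∧ -1 < p.2 ∧ p.2 < 1}

/-- Let `d = (1−3w)² + 6β(1−w) > 0` and `P = ((2+3β(1−w))/√d, (1+3w)/√d)`.  Then `P`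
lies in `B_III` iff `β(1−w) > 2w` and `9β²(1−w)² + 6β(1−w) + 4 > (1−3w)²`; moreover in
that case the `Σ`-coordinate of `P` is strictly positive. -/
theorem P_in_BIII_iff (w β : ℝ) (hw : w ∈ Set.Ioo (-(1 / 3) : ℝ) 1)
    (d : ℝ) (hd : d = (1 - 3 * w) ^ 2 + 6 * β * (1 - w)) (hdpos : 0 < d) :
    let P : ℝ × ℝ := ((2 + 3 * β * (1 - w)) / Real.sqrt d, (1 + 3 * w) / Real.sqrt d)
    (P ∈ BIII ↔
      2 * w < β * (1 - w) ∧ (1 - 3 * w) ^ 2 < 9 * β ^ 2 * (1 - w) ^ 2 + 6 * β * (1 - w) + 4) ∧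
    (P ∈ BIII → 0 < P.2) := by
  intro P
  obtain ⟨hw1, -⟩ := hw
  have hs : 0 < Real.sqrt d := Real.sqrt_pos.mpr hdpos
  have hN : 0 < 1 + 3 * w := by linarith
  have hP2 : 0 < P.2 := div_pos hN hs
  have h1 : P.2 < 1 ↔ 2 * w < β * (1 - w) := by
    change (1 + 3 * w) / Real.sqrt d < 1 ↔ _
    rw [div_lt_one hs, Real.lt_sqrt hN.le, hd]
    constructor <;> intro h <;> nlinarith
  have h2 : 2 * w < β * (1 - w) → (1 < P.1 ↔
      (1 - 3 * w) ^ 2 < 9 * β ^ 2 * (1 - w) ^ 2 + 6 * β * (1 - w) + 4) := by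
    intro hb
    -- `2 + 3β(1-w) > 2 + 6w > 0`, so squaring is an equivalence.
    have hH : 0 < 2 + 3 * β * (1 - w) := by linarith
    change 1 < (2 + 3 * β * (1 - w)) / Real.sqrt d ↔ _
    rw [one_lt_div hs, Real.sqrt_lt' hH, hd]
    constructor <;> intro h <;> nlinarith
  refine ⟨⟨fun ⟨hH, _, hS⟩ => ?_, fun ⟨hb, hq⟩ => ?_⟩, fun _ => hP2⟩
  · have hb := h1.mp hS
    exact ⟨hb, (h2 hb).mp hH⟩
  · exact ⟨(h2 hb).mpr hq, by linarith, h1.mpr hb⟩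
end

section
/- Let w ∈ (−1/3, 1) and β ∈ ℝ. The Jacobian matrix of the type III vector field f at the point T_♭ = (1,−1) has eigenvalues 6 and 3(1−w)(1−β); consequently T_♭ is a source of the planar system when β < 1 and a saddle when β > 1. -/
/-!
At `T_♭ = (1, -1)` the Jacobian is `diag(6, 3(1-w)(1-β))`: the first component of the field vanishes
on the line `H = 1` and the second on `Σ = -1`, so both off-diagonal partial derivatives are zero.
The characteristic polynomial is then read off the diagonal, and the sign of the second eigenvalue
is that of `1 - β` because `w < 1`.
-/

open Polynomial

/-- First component of the type III vector field: `−(1−H²)(2 − (3/2)(1−w)(1−Σ²) − HΣ)`. -/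
noncomputable def fIII1 (w β H S : ℝ) : ℝ :=
  -(1 - H ^ 2) * (2 - 3 / 2 * (1 - w) * (1 - S ^ 2) - H * S)

/-- Second component of the type III vector field: `−(1−Σ²)((1−H²) + (3/2)(1−w)(HΣ+β))`. -/
noncomputable def fIII2 (w β H S : ℝ) : ℝ :=
  -(1 - S ^ 2) * ((1 - H ^ 2) + 3 / 2 * (1 - w) * (H * S + β))

/-- The Jacobian matrix (matrix of partial derivatives) of the type III vector field. -/
noncomputable def JacIII (w β H S : ℝ) : Matrix (Fin 2) (Fin 2) ℝ :=
  !![deriv (fun x => fIII1 w β x S) H, deriv (fun y => fIII1 w β H y) S;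
     deriv (fun x => fIII2 w β x S) H, deriv (fun y => fIII2 w β H y) S]

/-- The factors `1 - H ^ 2` and `1 - S ^ 2` both vanish at `(1, -1)`, which makes the Jacobian
diagonal there, each diagonal entry coming from differentiating the vanishing factor alone. -/
theorem jacIII_at_Tflat (w β : ℝ) :
    JacIII w β 1 (-1) = !![6, 0; 0, 3 * (1 - w) * (1 - β)] := by
  have h11 : HasDerivAt (fun x => fIII1 w β x (-1)) 6 1 := by
    have h := (((hasDerivAt_id' (1 : ℝ)).pow 2).const_sub 1).neg.mul
      (((hasDerivAt_id' (1 : ℝ)).mul_const (-1)).const_sub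
        (2 - 3 / 2 * (1 - w) * (1 - (-1) ^ 2)))
    exact h.congr_deriv (by norm_num)
  have h22 : HasDerivAt (fun y => fIII2 w β 1 y) (3 * (1 - w) * (1 - β)) (-1) := by
    have h := (((hasDerivAt_id' (-1 : ℝ)).pow 2).const_sub 1).neg.mul
      (((((hasDerivAt_id' (-1 : ℝ)).const_mul 1).add_const β).const_mul
        (3 / 2 * (1 - w))).const_add (1 - 1 ^ 2))
    exact h.congr_deriv (by norm_num; ring)
  have h12 : (fun y => fIII1 w β 1 y) = fun _ => 0 := by
    funext y; simp [fIII1]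
  have h21 : (fun x => fIII2 w β x (-1)) = fun _ => 0 := by
    funext x; simp [fIII2]
  rw [JacIII, h11.deriv, h22.deriv, h12, h21, deriv_const, deriv_const]

/-- The Jacobian of the type III vector field at `T_♭ = (1,−1)` has eigenvalues `6` and
`3(1−w)(1−β)`; consequently `T_♭` is a source when `β < 1` (both eigenvalues positive)
and a saddle when `β > 1` (eigenvalues of opposite sign). -/
theorem jacobian_at_Tflat (w β : ℝ) (hw : w ∈ Set.Ioo (-(1 / 3) : ℝ) 1) :
    (JacIII w β 1 (-1)).charpoly = (X - C 6) * (X - C (3 * (1 - w) * (1 - β))) ∧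
      (0 : ℝ) < 6 ∧
      (β < 1 → 0 < 3 * (1 - w) * (1 - β)) ∧
      (1 < β → 3 * (1 - w) * (1 - β) < 0) := by
  obtain ⟨-, hw1⟩ := hw
  have hpos : 0 < 3 * (1 - w) := by linarith
  refine ⟨?_, by norm_num, fun h => mul_pos hpos (by linarith),
    fun h => mul_neg_of_pos_of_neg hpos (by linarith)⟩
  rw [jacIII_at_Tflat, Matrix.charpoly, Matrix.det_fin_two]
  simp
end

section
/- Let w ∈ (−1/3, 1) and β ∈ ℝ. The Jacobian matrix of the type III vector field f at the point Q_♭ = (1,1) has eigenvalues 2 and 3(1−w)(1+β); consequently Q_♭ is a source of the planar system when β > −1 and a saddle when β < −1. -/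
/-!
On the invariant lines `H = 1` and `Σ = 1` the first, respectively second, component of the field
vanishes because of its factor `1 − H²`, respectively `1 − Σ²`. Hence both off-diagonal partial
derivatives at `(1, 1)` vanish, and each diagonal one is, by the product rule, `2` times the value
of the cofactor at `(1, 1)`: this gives `2` and `3(1−w)(1+β)`. The characteristic polynomial of the
resulting diagonal matrix splits accordingly, and the signs follow from `1 − w > 0`.
-/

open Polynomial

/-- Product rule for `-(1 - x²) g(x)` at `x = 1`: only the value of `g` there contributes. -/
lemma hasDerivAt_neg_one_sub_sq_mul {g : ℝ → ℝ} (hg : DifferentiableAt ℝ g 1) :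
    HasDerivAt (fun x => -(1 - x ^ 2) * g x) (2 * g 1) 1 := by
  have h := (((hasDerivAt_pow 2 (1 : ℝ)).const_sub 1).fun_neg).fun_mul hg.hasDerivAt
  exact h.congr_deriv (by norm_num)

lemma JacIII_one_one (w β : ℝ) :
    JacIII w β 1 1 = !![2, 0; 0, 3 * (1 - w) * (1 + β)] := by
  have h11 : deriv (fun x => fIII1 w β x 1) 1 = 2 := by
    unfold fIII1
    rw [(hasDerivAt_neg_one_sub_sq_mul (by fun_prop)).deriv]
    ring
  have h12 : deriv (fun y => fIII1 w β 1 y) 1 = 0 := by simp [fIII1]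
  have h21 : deriv (fun x => fIII2 w β x 1) 1 = 0 := by simp [fIII2]
  have h22 : deriv (fun y => fIII2 w β 1 y) 1 = 3 * (1 - w) * (1 + β) := by
    unfold fIII2
    rw [(hasDerivAt_neg_one_sub_sq_mul (by fun_prop)).deriv]
    ring
  rw [JacIII, h11, h12, h21, h22]

/-- The Jacobian of the type III vector field at `Q_♭ = (1,1)` has eigenvalues `2` and
`3(1−w)(1+β)`; consequently `Q_♭` is a source when `β > −1` (both eigenvalues positive)
and a saddle when `β < −1` (eigenvalues of opposite sign). -/
theorem jacobian_at_Qflat (w β : ℝ) (hw : w ∈ Set.Ioo (-(1 / 3) : ℝ) 1) :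
    (JacIII w β 1 1).charpoly = (X - C 2) * (X - C (3 * (1 - w) * (1 + β))) ∧
      (0 : ℝ) < 2 ∧
      (-1 < β → 0 < 3 * (1 - w) * (1 + β)) ∧
      (β < -1 → 3 * (1 - w) * (1 + β) < 0) := by
  have hw' : 0 < 1 - w := sub_pos.mpr hw.2
  refine ⟨?_, two_pos, fun hβ => ?_, fun hβ => ?_⟩
  · rw [JacIII_one_one, Matrix.charpoly, Matrix.det_fin_two]
    simp [Matrix.charmatrix]
  · have : 0 < 1 + β := by linarith
    positivity
  · exact mul_neg_of_pos_of_neg (by positivity) (by linarith)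
end

section
/- Let w ∈ (−1/3, 1) and β ∈ (−1, 1). The Jacobian matrix of the type III vector field f at the point R_♭ = (1,−β) has eigenvalues 3β²(1−w) + 1 + 3w + 2β and −(3/2)(1−w)(1−β²); in particular the second eigenvalue is strictly negative. -/
/-!
The line `H = 1` is invariant: `fIII1` carries the factor `1 - H²`, so its `Σ`-derivative vanishes
there. The Jacobian at `(1, -β)` is therefore lower triangular, and its eigenvalues are the diagonal
entries. The factor `HΣ + β` of `fIII2` also vanishes at `(1, -β)`, so only its own derivative
contributes to the second diagonal entry (`hasDerivAt_fIII2_S`). That entry is negative because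
`w < 1` and `β² < 1`.
-/

open Polynomial

theorem hasDerivAt_fIII1_H (w β : ℝ) :
    HasDerivAt (fun x => fIII1 w β x (-β)) (3 * β ^ 2 * (1 - w) + 1 + 3 * w + 2 * β) 1 := by
  unfold fIII1
  have h := (((hasDerivAt_id (1 : ℝ)).pow 2).const_sub 1).neg.mul
    (((hasDerivAt_id (1 : ℝ)).mul_const (-β)).const_sub
      (2 - 3 / 2 * (1 - w) * (1 - (-β) ^ 2)))
  refine h.congr_deriv ?_
  simp
  ring

theorem hasDerivAt_fIII2_S (w β : ℝ) :
    HasDerivAt (fun y => fIII2 w β 1 y) (-(3 / 2) * (1 - w) * (1 - β ^ 2)) (-β) := by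
  unfold fIII2
  have h := (((hasDerivAt_id (-β)).pow 2).const_sub 1).neg.mul
    (((((hasDerivAt_id (-β)).const_mul 1).add_const β).const_mul
      (3 / 2 * (1 - w))).const_add (1 - (1 : ℝ) ^ 2))
  refine h.congr_deriv ?_
  simp
  ring

/-- For `β ∈ (−1,1)`, the Jacobian of the type III vector field at `R_♭ = (1,−β)` has
eigenvalues `3β²(1−w) + 1 + 3w + 2β` and `−(3/2)(1−w)(1−β²)`; the second eigenvalue is
strictly negative. -/
theorem jacobian_at_Rflat (w β : ℝ) (hw : w ∈ Set.Ioo (-(1 / 3) : ℝ) 1)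
    (hβ : β ∈ Set.Ioo (-1 : ℝ) 1) :
    (JacIII w β 1 (-β)).charpoly =
        (X - C (3 * β ^ 2 * (1 - w) + 1 + 3 * w + 2 * β)) *
          (X - C (-(3 / 2) * (1 - w) * (1 - β ^ 2))) ∧
      -(3 / 2) * (1 - w) * (1 - β ^ 2) < 0 := by
  obtain ⟨-, hw1⟩ := hw
  obtain ⟨hβ0, hβ1⟩ := hβ
  constructor
  · have h12 : deriv (fun y => fIII1 w β 1 y) (-β) = 0 := by simp [fIII1]
    rw [JacIII, (hasDerivAt_fIII1_H w β).deriv, (hasDerivAt_fIII2_S w β).deriv, h12]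
    simp only [Matrix.charpoly, Matrix.charmatrix, Matrix.det_fin_two]
    simp
  · have hβ2 : 0 < 1 - β ^ 2 := by nlinarith
    have := mul_pos (sub_pos.mpr hw1) hβ2
    linarith
end

section
/- Let w ∈ (−1/3, 1) and β ∈ ℝ with d := (1−3w)² + 6β(1−w) > 0, and let P := ((2+3β(1−w))/√d, (1+3w)/√d). Then the Jacobian matrix Df(P) of the type III vector field f at P satisfies det Df(P) = 9(1−w)(3β²(1−w)+1+3w+2β)(β(1−w)−2w)/d and tr Df(P) = −3(1−w)(1+2β)/√d. -/
/-! The point `P` is a zero of the vector field of a special kind: the second factors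
`A = 2 − (3/2)(1−w)(1−Σ²) − HΣ` and `B = (1−H²) + (3/2)(1−w)(HΣ+β)` of the two components both
vanish there (`factors_eq_zero`). So the product rule (`JacIII_eq`) leaves only the terms
`−(1−H²) ∂A` and `−(1−Σ²) ∂B` in the Jacobian matrix, and the formulas for its determinant and trace
become rational identities once `(√d)² = d` is used. -/

open Polynomial

/-- The partial derivatives of the vector field, by the product rule. The terms in which the second
factor of a component is left undifferentiated are kept in the form `2 H A` and `2 Σ B`. -/
lemma JacIII_eq (w β H S : ℝ) :
    JacIII w β H S =
      !![2 * H * (2 - 3 / 2 * (1 - w) * (1 - S ^ 2) - H * S) + (1 - H ^ 2) * S,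
          -(1 - H ^ 2) * (3 * (1 - w) * S - H);
         -(1 - S ^ 2) * (-2 * H + 3 / 2 * (1 - w) * S),
          2 * S * ((1 - H ^ 2) + 3 / 2 * (1 - w) * (H * S + β))
            - (1 - S ^ 2) * (3 / 2 * (1 - w) * H)] := by
  have sq1 (x : ℝ) : HasDerivAt (fun x : ℝ => 1 - x ^ 2) (-(2 * x)) x := by
    simpa using (hasDerivAt_pow 2 x).const_sub 1
  have hHS : HasDerivAt (fun x : ℝ => x * S) S H := by
    simpa using (hasDerivAt_id H).mul_const S
  have hSH : HasDerivAt (fun y : ℝ => H * y) H S := by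
    simpa using (hasDerivAt_id S).const_mul H
  have h11 := (sq1 H).fun_neg.fun_mul (hHS.const_sub (2 - 3 / 2 * (1 - w) * (1 - S ^ 2)))
  have h12 := ((((sq1 S).const_mul (3 / 2 * (1 - w))).const_sub 2).fun_sub hSH).const_mul
    (-(1 - H ^ 2))
  have h21 := ((sq1 H).fun_add ((hHS.add_const β).const_mul (3 / 2 * (1 - w)))).const_mul
    (-(1 - S ^ 2))
  have h22 := (sq1 S).fun_neg.fun_mul
    (((hSH.add_const β).const_mul (3 / 2 * (1 - w))).const_add (1 - H ^ 2))
  unfold JacIII fIII1 fIII2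
  rw [h11.deriv, h12.deriv, h21.deriv, h22.deriv]
  congr! 3 <;> ring_nf

/-- The second factors of both components vanish at `P = (H, S)`, so `P` is an equilibrium. Only the
quadratic monomials in the coordinates of `P` enter, which removes the square root. -/
lemma factors_eq_zero {w β d H S : ℝ} (hd : d = (1 - 3 * w) ^ 2 + 6 * β * (1 - w)) (hd0 : d ≠ 0)
    (hHH : H ^ 2 = (2 + 3 * β * (1 - w)) ^ 2 / d) (hSS : S ^ 2 = (1 + 3 * w) ^ 2 / d)
    (hHS : H * S = (2 + 3 * β * (1 - w)) * (1 + 3 * w) / d) :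
    2 - 3 / 2 * (1 - w) * (1 - S ^ 2) - H * S = 0 ∧
      (1 - H ^ 2) + 3 / 2 * (1 - w) * (H * S + β) = 0 := by
  rw [hHH, hSS, hHS]
  constructor <;> field_simp <;> rw [hd] <;> ring

/-- With `d = (1−3w)² + 6β(1−w) > 0` and `P = ((2+3β(1−w))/√d, (1+3w)/√d)`, the
Jacobian `Df(P)` of the type III vector field at `P` satisfies
`det Df(P) = 9(1−w)(3β²(1−w)+1+3w+2β)(β(1−w)−2w)/d` and
`tr Df(P) = −3(1−w)(1+2β)/√d`. -/
theorem jacobian_at_P_det_trace (w β : ℝ) (hw : w ∈ Set.Ioo (-(1 / 3) : ℝ) 1)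
    (d : ℝ) (hd : d = (1 - 3 * w) ^ 2 + 6 * β * (1 - w)) (hdpos : 0 < d) :
    (JacIII w β ((2 + 3 * β * (1 - w)) / Real.sqrt d) ((1 + 3 * w) / Real.sqrt d)).det =
        9 * (1 - w) * (3 * β ^ 2 * (1 - w) + 1 + 3 * w + 2 * β) * (β * (1 - w) - 2 * w) / d ∧
      Matrix.trace
          (JacIII w β ((2 + 3 * β * (1 - w)) / Real.sqrt d) ((1 + 3 * w) / Real.sqrt d)) =
        -3 * (1 - w) * (1 + 2 * β) / Real.sqrt d := by
  have hs : Real.sqrt d ^ 2 = d := Real.sq_sqrt hdpos.le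
  have hs0 : Real.sqrt d ≠ 0 := (Real.sqrt_pos.2 hdpos).ne'
  have hd0 : d ≠ 0 := hdpos.ne'
  generalize Real.sqrt d = s at hs hs0 ⊢
  have hHH : ((2 + 3 * β * (1 - w)) / s) ^ 2 = (2 + 3 * β * (1 - w)) ^ 2 / d := by
    rw [div_pow, hs]
  have hSS : ((1 + 3 * w) / s) ^ 2 = (1 + 3 * w) ^ 2 / d := by rw [div_pow, hs]
  have hHS : (2 + 3 * β * (1 - w)) / s * ((1 + 3 * w) / s) =
      (2 + 3 * β * (1 - w)) * (1 + 3 * w) / d := by rw [div_mul_div_comm, ← pow_two, hs]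
  obtain ⟨hA, hB⟩ := factors_eq_zero hd hd0 hHH hSS hHS
  rw [JacIII_eq, hA, hB, Matrix.det_fin_two_of, Matrix.trace_fin_two_of, hHH, hSS]
  constructor
  · generalize (2 + 3 * β * (1 - w)) / s = H at *
    generalize (1 + 3 * w) / s = S at *
    -- The entries are odd in `(H, S)`, so their products involve `H²`, `S²` and `H S` only.
    trans (1 - (2 + 3 * β * (1 - w)) ^ 2 / d) * (1 - (1 + 3 * w) ^ 2 / d) *
        (6 * (1 - w) * (H * S) - 9 / 2 * (1 - w) ^ 2 * S ^ 2 - 2 * H ^ 2)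
    · ring
    rw [hHH, hSS, hHS]
    field_simp
    rw [hd]
    ring
  · field_simp
    rw [hd]
    ring
end

section
/- Let w ∈ (−1/3, 1) and β ∈ ℝ. Then: (i) there exists H₀ > 1 such that for all H ≥ H₀ and all Σ ∈ (−1,1), the second component of the type III vector field f(H,Σ) is strictly positive; and (ii) for every ε ∈ (0,1) there exists H₁ > 1 such that for all H ≥ H₁, the first component of f(H,Σ) is strictly negative for all Σ ∈ [ε, 1] and strictly positive for all Σ ∈ [−1, −ε]. (This is the sign behaviour of the type III flow for large H used to show that the two points at infinity act as saddles.) -/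
/-- Sign behaviour of the type III flow for large `H`: (i) for all sufficiently large `H`
and all `Σ ∈ (−1,1)` the second component of `f` is positive; (ii) for every
`ε ∈ (0,1)`, for all sufficiently large `H` the first component of `f` is negative for
`Σ ∈ [ε,1]` and positive for `Σ ∈ [−1,−ε]`. -/
theorem typeIII_flow_at_infinity (w β : ℝ) (hw : w ∈ Set.Ioo (-(1 / 3) : ℝ) 1) :
    (∃ H₀ : ℝ, 1 < H₀ ∧ ∀ H, H₀ ≤ H → ∀ S ∈ Set.Ioo (-1 : ℝ) 1,
      0 < (fIII w β (H, S)).2) ∧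
    ∀ ε ∈ Set.Ioo (0 : ℝ) 1, ∃ H₁ : ℝ, 1 < H₁ ∧ ∀ H, H₁ ≤ H →
      (∀ S ∈ Set.Icc ε 1, (fIII w β (H, S)).1 < 0) ∧
      (∀ S ∈ Set.Icc (-1 : ℝ) (-ε), 0 < (fIII w β (H, S)).1) := by
  obtain ⟨hw1, hw2⟩ := hw
  obtain ⟨c, hc⟩ : ∃ c, c = 3 / 2 * (1 - w) := ⟨_, rfl⟩
  have hc0 : 0 < c := by linarith
  have hc2 : c < 2 := by linarith
  simp only [fIII, ← hc]
  refine ⟨⟨4 + |β|, by linarith [abs_nonneg β], ?_⟩, ?_⟩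
  · rintro H hH S ⟨hS1, hS2⟩
    have hβ := abs_nonneg β
    have hS : 0 < 1 - S ^ 2 := by nlinarith
    have hb : c * (H * S + β) ≤ 2 * (H + |β|) := by
      have h1 : H * S + β ≤ H + |β| := by nlinarith [le_abs_self β]
      have h2 : 0 ≤ H + |β| := by linarith
      nlinarith
    have hq : 0 < H ^ 2 - 1 - c * (H * S + β) := by nlinarith
    linarith [mul_pos hS hq]
  · rintro ε ⟨hε0, hε1⟩
    -- `3 / ε` exceeds `2 / ε`, as the sign requires, and is larger than `1` as well.
    refine ⟨3 / ε, by rw [lt_div_iff₀ hε0]; linarith, fun H hH => ?_⟩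
    have hHε : 3 ≤ H * ε := (div_le_iff₀ hε0).1 hH
    have hH1 : 1 < H := by nlinarith
    have hq : 0 < H ^ 2 - 1 := by nlinarith
    constructor
    · rintro S ⟨hS1, hS2⟩
      have hS : 0 ≤ 1 - S ^ 2 := by nlinarith
      have hHS : 3 ≤ H * S := by nlinarith
      have hr : 0 < H * S - 2 + c * (1 - S ^ 2) := by nlinarith [mul_nonneg hc0.le hS]
      linarith [mul_pos hq hr]
    · rintro S ⟨hS1, hS2⟩
      have hS : c * (1 - S ^ 2) ≤ 2 := by nlinarith [mul_nonneg hc0.le (sq_nonneg S)]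
      have hHS : H * S ≤ -3 := by nlinarith
      have hr : 0 < 2 - c * (1 - S ^ 2) - H * S := by linarith
      linarith [mul_pos hq hr]
end

section
/- Let w ∈ (−1/3, 1). There is no point (H,Σ,M) with H > 1, −1 < Σ < 1 and 0 < M < √(12(1−Σ²)) at which both −(1−H²)(q − HΣ) = 0 and M(qH − 4Σ + (1−H²)Σ) = 0 hold, where Ω = 1 − Σ² − M²/12 and q = 2Σ² + ((1+3w)/2)Ω. In particular, for every choice of the anisotropy function, the full LRS Bianchi type VIII system has no equilibrium points in the state space X_VIII. -/
/-!
Since `H > 1`, vanishing of the `H`-component forces `q = HΣ`. Substituting this into the bracket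
of the `M`-component collapses it to `-3Σ`, so `Σ = 0` and hence `q = 0`. With `Σ = 0`,
`q = ((1+3w)/2) Ω`, which is positive because `w > -1/3` and `M < √(12(1−Σ²))` means `Ω > 0`:
a contradiction. Neither component involves `u`, so the claim on equilibria follows at once.
-/

/-- Normalised energy density `Ω = 1 − Σ² − M²/12`. -/
noncomputable def Om (S M : ℝ) : ℝ := 1 - S ^ 2 - M ^ 2 / 12

/-- Deceleration parameter `q = 2Σ² + ((1+3w)/2)Ω`. -/
noncomputable def qdec (w S M : ℝ) : ℝ := 2 * S ^ 2 + (1 + 3 * w) / 2 * Om S M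

/-- The metric anisotropy variable `s = (2 − 3(1−H²)/M²)⁻¹`. -/
noncomputable def sVar (H M : ℝ) : ℝ := (2 - 3 * (1 - H ^ 2) / M ^ 2)⁻¹

/-- The full LRS Bianchi type VIII vector field with matter parameters `w` and
anisotropy function `u`. -/
noncomputable def Ffull (w : ℝ) (u : ℝ → ℝ) (p : ℝ × ℝ × ℝ) : ℝ × ℝ × ℝ :=
  (-(1 - p.1 ^ 2) * (qdec w p.2.1 p.2.2 - p.1 * p.2.1),
   -(2 - qdec w p.2.1 p.2.2) * p.1 * p.2.1 - (1 - p.1 ^ 2) * (1 - p.2.1 ^ 2)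
      + p.2.2 ^ 2 / 3 + 3 * Om p.2.1 p.2.2 * (u (sVar p.1 p.2.2) - w),
   p.2.2 * (qdec w p.2.1 p.2.2 * p.1 - 4 * p.2.1 + (1 - p.1 ^ 2) * p.2.1))

/-- The LRS Bianchi type VIII state space
`X_VIII = {(H,Σ,M) : H > 1, −1 < Σ < 1, 0 < M < √(12(1−Σ²))}`. -/
noncomputable def XVIII : Set (ℝ × ℝ × ℝ) :=
  {p : ℝ × ℝ × ℝ | 1 < p.1 ∧ -1 < p.2.1 ∧ p.2.1 < 1 ∧
    0 < p.2.2 ∧ p.2.2 < Real.sqrt (12 * (1 - p.2.1 ^ 2))}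

/-- There is no point of the state space `X_VIII` at which both the `H`- and the
`M`-component of the full system vanish; in particular, for every anisotropy function
`u` the full LRS Bianchi type VIII system has no equilibrium points in `X_VIII`. -/
theorem no_interior_equilibria (w : ℝ) (hw : w ∈ Set.Ioo (-(1 / 3) : ℝ) 1) :
    (∀ H S M : ℝ, 1 < H → -1 < S → S < 1 → 0 < M → M < Real.sqrt (12 * (1 - S ^ 2)) →
      ¬ (-(1 - H ^ 2) * (qdec w S M - H * S) = 0 ∧
         M * (qdec w S M * H - 4 * S + (1 - H ^ 2) * S) = 0)) ∧
    ∀ u : ℝ → ℝ, ∀ p ∈ XVIII, Ffull w u p ≠ 0 := by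
  have key : ∀ H S M : ℝ, 1 < H → -1 < S → S < 1 → 0 < M →
      M < Real.sqrt (12 * (1 - S ^ 2)) →
      ¬ (-(1 - H ^ 2) * (qdec w S M - H * S) = 0 ∧
         M * (qdec w S M * H - 4 * S + (1 - H ^ 2) * S) = 0) := by
    rintro H S M hH - - hM hMlt ⟨h1, h2⟩
    have hH2 : -(1 - H ^ 2) ≠ 0 := by nlinarith
    have hq : qdec w S M = H * S := sub_eq_zero.mp ((mul_eq_zero.mp h1).resolve_left hH2)
    have h3 := (mul_eq_zero.mp h2).resolve_left hM.ne'
    rw [hq] at h3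
    have hS : S = 0 := by linarith
    subst hS
    have hM2 : M ^ 2 < 12 * (1 - 0 ^ 2) := (Real.lt_sqrt hM.le).mp hMlt
    have hOm : 0 < Om 0 M := by
      unfold Om
      linarith
    have hpos : 0 < (1 + 3 * w) / 2 * Om 0 M := mul_pos (by linarith [hw.1]) hOm
    unfold qdec at hq
    linarith
  refine ⟨key, ?_⟩
  rintro u ⟨H, S, M⟩ ⟨hH, hS, hS', hM, hMlt⟩ h0
  exact key H S M hH hS hS' hM hMlt
    ⟨congrArg Prod.fst h0, congrArg (fun p : ℝ × ℝ × ℝ => p.2.2) h0⟩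
end

section
/- Let w ∈ (−1/3, 1) and define Z₅(H,Σ,M) := H·M^{1/3}/(H²−1)^{2/3} for H > 1, M > 0. Then the derivative of Z₅ along the full LRS Bianchi type VIII vector field, namely ∂_H Z₅ · H' + ∂_M Z₅ · M' with H' = −(1−H²)(q − HΣ) and M' = M(qH − 4Σ + (1−H²)Σ), equals −((4Σ² + (1+3w)Ω)/(2H))·Z₅, where Ω = 1 − Σ² − M²/12 and q = 2Σ² + ((1+3w)/2)Ω. Consequently, this derivative is strictly negative at every point of the state space X_VIII = {(H,Σ,M) : H > 1, −1 < Σ < 1, 0 < M < √(12(1−Σ²))}, i.e., Z₅ is strictly monotonically decreasing along the flow in X_VIII (for any choice of the anisotropy function, since Z₅ does not depend on Σ'). -/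
/-- The monotone function `Z₅(H,Σ,M) = H·M^{1/3}/(H²−1)^{2/3}` (independent of `Σ`). -/
noncomputable def Z5 (H M : ℝ) : ℝ :=
  H * M ^ ((1 : ℝ) / 3) / (H ^ 2 - 1) ^ ((2 : ℝ) / 3)

theorem Z5_hasDerivAt_H {H : ℝ} (M : ℝ) (hH : 1 < H) :
    HasDerivAt (fun x => Z5 x M) (Z5 H M * (1 / H - 4 * H / (3 * (H ^ 2 - 1)))) H := by
  have hD : 0 < H ^ 2 - 1 := by nlinarith
  have hpow := ((hasDerivAt_pow 2 H).sub_const 1).rpow_const (p := (2 : ℝ) / 3) (Or.inl hD.ne')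
  have hP : 0 < (H ^ 2 - 1) ^ ((2 : ℝ) / 3) := Real.rpow_pos_of_pos hD _
  have h := ((hasDerivAt_id H).mul_const (M ^ ((1 : ℝ) / 3))).div hpow hP.ne'
  refine h.congr_deriv ?_
  rw [Real.rpow_sub_one hD.ne']
  simp only [Z5, id]
  have hH0 : H ≠ 0 := by positivity
  have hD0 := hD.ne'
  -- The power is made opaque so that the remaining identity is one of rational functions.
  generalize (H ^ 2 - 1) ^ ((2 : ℝ) / 3) = P at hP ⊢
  field_simp
  push_cast
  ring

theorem Z5_hasDerivAt_M (H : ℝ) {M : ℝ} (hM : 0 < M) :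
    HasDerivAt (fun y => Z5 H y) (Z5 H M * (1 / (3 * M))) M := by
  have h := ((Real.hasDerivAt_rpow_const (x := M) (p := (1 : ℝ) / 3) (Or.inl hM.ne')).const_mul
    H).div_const ((H ^ 2 - 1) ^ ((2 : ℝ) / 3))
  refine h.congr_deriv ?_
  rw [Real.rpow_sub_one hM.ne', Z5]
  ring

theorem Z5_pos {H M : ℝ} (hH : 1 < H) (hM : 0 < M) : 0 < Z5 H M := by
  have hD : 0 < H ^ 2 - 1 := by nlinarith
  unfold Z5
  positivity

/-- The matter content is positive on the state space. -/
theorem Om_pos {S M : ℝ} (hM : 0 < M) (h : M < Real.sqrt (12 * (1 - S ^ 2))) : 0 < Om S M := by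
  rw [Real.lt_sqrt hM.le] at h
  unfold Om
  linarith

/-- The derivative of `Z₅` along the full LRS Bianchi type VIII vector field,
`∂_H Z₅ · H' + ∂_M Z₅ · M'` with `H' = −(1−H²)(q−HΣ)` and `M' = M(qH−4Σ+(1−H²)Σ)`,
equals `−((4Σ² + (1+3w)Ω)/(2H))·Z₅`, and is strictly negative at every point of the
state space `X_VIII`; hence `Z₅` is strictly monotonically decreasing along the flow in
`X_VIII` (for any anisotropy function, since `Z₅` does not depend on `Σ`). -/
theorem Z5_decreasing (w : ℝ) (hw : w ∈ Set.Ioo (-(1 / 3) : ℝ) 1) :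
    ∀ H S M : ℝ, 1 < H → -1 < S → S < 1 → 0 < M → M < Real.sqrt (12 * (1 - S ^ 2)) →
      deriv (fun x => Z5 x M) H * (-(1 - H ^ 2) * (qdec w S M - H * S)) +
          deriv (fun y => Z5 H y) M *
            (M * (qdec w S M * H - 4 * S + (1 - H ^ 2) * S)) =
        -((4 * S ^ 2 + (1 + 3 * w) * Om S M) / (2 * H)) * Z5 H M ∧
      -((4 * S ^ 2 + (1 + 3 * w) * Om S M) / (2 * H)) * Z5 H M < 0 := by
  intro H S M hH _ _ hM hMS
  have hD : 0 < H ^ 2 - 1 := by nlinarith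
  have hH0 : 0 < H := by linarith
  have hZ := Z5_pos hH hM
  have hO := Om_pos hM hMS
  have hw1 : 0 < 1 + 3 * w := by linarith [hw.1]
  constructor
  · rw [(Z5_hasDerivAt_H M hH).deriv, (Z5_hasDerivAt_M H hM).deriv]
    have hD0 := hD.ne'
    unfold qdec
    field_simp
    ring
  · have hq : 0 < (4 * S ^ 2 + (1 + 3 * w) * Om S M) / (2 * H) := by positivity
    nlinarith [mul_pos hq hZ]
end
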